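/- arXiv:0806.3874 — 8 statements merged into one kernel-verified Lean document; each statement's English description precedes it below -/
import Mathlib

section
/- Let L be a linear functional on the space ℝ[x]_{2t} of polynomials of total degree at most 2t in n variables such that the moment matrix M_t(L) is positive semidefinite. Then for every integer s with 1 ≤ s ≤ t one has Ker M_t(L) ∩ ℝ[x]_s = Ker M_s(L); that is, a polynomial p of degree at most s satisfies L(p·x^β) = 0 for all monomials x^β of degree at most t if and only if L(p·x^β) = 0 for all monomials x^β of degree at most s. -/
open MvPolynomial

noncomputable section

/-- The polynomial ring `ℝ[x₁,…,xₙ]`. -/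
abbrev MP (n : ℕ) := MvPolynomial (Fin n) ℝ

/-- The total degree `|α|` of a monomial exponent `α`. -/
def mdeg {n : ℕ} (α : Fin n →₀ ℕ) : ℕ := α.sum fun _ e => e

/-- The subspace `ℝ[x]_t` of polynomials of total degree at most `t`. -/
abbrev RxT (n t : ℕ) : Submodule ℝ (MP n) := restrictTotalDegree (Fin n) ℝ t

/-- The kernel of the moment matrix `M_s(L)`: polynomials `p` of degree at most `s` such that
`L(p·x^β) = 0` for all monomials `x^β` of degree at most `s`. -/
def momKer {n : ℕ} (L : Module.Dual ℝ (MP n)) (s : ℕ) : Set (MP n) :=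
  {p | p.totalDegree ≤ s ∧ ∀ β : Fin n →₀ ℕ, mdeg β ≤ s → L (p * monomial β 1) = 0}

/-- Positive semidefiniteness of the moment matrix `M_t(L)`: `L(p²) ≥ 0` for all `p ∈ ℝ[x]_t`. -/
def momPSD {n : ℕ} (L : Module.Dual ℝ (MP n)) (t : ℕ) : Prop :=
  ∀ p : MP n, p.totalDegree ≤ t → 0 ≤ L (p * p)

/-- The bilinear/moment form of order `s` associated to `L`, as a map `ℝ[x]_s → (ℝ[x]_s)*`;
its matrix in the monomial basis is the moment matrix `M_s(L)`. -/
def momBil {n : ℕ} (L : Module.Dual ℝ (MP n)) (s : ℕ) :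
    RxT n s →ₗ[ℝ] Module.Dual ℝ (RxT n s) :=
  LinearMap.mk₂ ℝ (fun p q => L ((p : MP n) * (q : MP n)))
    (fun p p' q => by simp [add_mul])
    (fun c p q => by simp [smul_mul_assoc])
    (fun p q q' => by simp [mul_add])
    (fun c p q => by simp [mul_smul_comm])

/-- The rank of the moment matrix `M_s(L)`. -/
def momRank {n : ℕ} (L : Module.Dual ℝ (MP n)) (s : ℕ) : ℕ :=
  Module.finrank ℝ (LinearMap.range (momBil L s))

/-- The column of the moment matrix `M_s(L)` indexed by the monomial `β`. -/
def momCol {n : ℕ} (L : Module.Dual ℝ (MP n)) (s : ℕ) (β : Fin n →₀ ℕ) :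
    {α : Fin n →₀ ℕ // mdeg α ≤ s} → ℝ :=
  fun α => L (monomial (α.1 + β) 1)

/-- `G^⊥`: linear functionals vanishing on the set `G`. -/
def annih {n : ℕ} (G : Set (MP n)) : Submodule ℝ (Module.Dual ℝ (MP n)) :=
  (Submodule.span ℝ G).dualAnnihilator

/-- The projection `π_s` sending a linear functional to its restriction to `ℝ[x]_s`. -/
def projDual (n s : ℕ) : Module.Dual ℝ (MP n) →ₗ[ℝ] Module.Dual ℝ (RxT n s) :=
  (RxT n s).subtype.dualMap

/-- `dim π_s(G^⊥)`. -/
def dimProj {n : ℕ} (s : ℕ) (G : Set (MP n)) : ℕ :=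
  Module.finrank ℝ (Submodule.map (projDual n s) (annih G))

/-- The one-degree prolongation `S⁺ = S ∪ x₁S ∪ … ∪ xₙS` of a set of polynomials. -/
def plusOp {n : ℕ} (G : Set (MP n)) : Set (MP n) :=
  G ∪ ⋃ i : Fin n, (fun p => X i * p) '' G

/-- The set `H_t = {x^α h_j : |α| + deg h_j ≤ t}` of prolongations of the generators. -/
def Hset {n m : ℕ} (h : Fin m → MP n) (t : ℕ) : Set (MP n) :=
  {p | ∃ (α : Fin n →₀ ℕ) (j : Fin m), mdeg α + (h j).totalDegree ≤ t ∧ p = monomial α 1 * h j}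

/-- The cone `K_{t,⪰}` of linear functionals vanishing on `H_t` with `M_{⌊t/2⌋}(L) ⪰ 0`. -/
def Kpos {n m : ℕ} (h : Fin m → MP n) (t : ℕ) : Set (Module.Dual ℝ (MP n)) :=
  {L | (∀ g ∈ Hset h t, L g = 0) ∧ momPSD L (t / 2)}

/-- `L*` is generic in `K_{t,⪰}`: it belongs to `K_{t,⪰}` and its moment matrix
`M_{⌊t/2⌋}(L*)` has maximum rank over `K_{t,⪰}`. -/
def Generic {n m : ℕ} (h : Fin m → MP n) (t : ℕ) (Ls : Module.Dual ℝ (MP n)) : Prop :=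
  Ls ∈ Kpos h t ∧ ∀ L ∈ Kpos h t, momRank L (t / 2) ≤ momRank Ls (t / 2)

/-- `W_t = {x^α g : |α| ≤ ⌊t/2⌋, g ∈ N_t}`, with `N_t = Ker M_{⌊t/2⌋}(L*)` for `L*` generic. -/
def Wset {n m : ℕ} (h : Fin m → MP n) (t : ℕ) (Ls : Module.Dual ℝ (MP n)) : Set (MP n) :=
  {p | ∃ (α : Fin n →₀ ℕ) (g : MP n), mdeg α ≤ t / 2 ∧ g ∈ momKer Ls (t / 2) ∧
    p = monomial α 1 * g}

/-- The real radical `√[ℝ]I` of an ideal `I`. -/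
def realRad {n : ℕ} (I : Ideal (MP n)) : Set (MP n) :=
  {p | ∃ m : ℕ, 0 < m ∧ ∃ (k : ℕ) (q : Fin k → MP n), p ^ (2 * m) + ∑ j, q j ^ 2 ∈ I}

/-- A set of monomials closed under taking divisions. -/
def DivClosed {n : ℕ} (B : Set (Fin n →₀ ℕ)) : Prop :=
  ∀ a ∈ B, ∀ a' : Fin n →₀ ℕ, a' ≤ a → a' ∈ B

/-- A set of monomials connected to 1: each `m ∈ B` is a product `m = m₁⋯m_k` with `m₁ = 1`
and all partial products `m₁⋯m_h ∈ B` (written additively on exponents). -/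
def ConnectedToOne {n : ℕ} (B : Set (Fin n →₀ ℕ)) : Prop :=
  ∀ a ∈ B, ∃ (k : ℕ) (c : Fin (k + 1) → (Fin n →₀ ℕ)),
    c 0 = 0 ∧ (∀ j : Fin (k + 1), (∑ i ∈ Finset.univ.filter (· ≤ j), c i) ∈ B) ∧
    (∑ i, c i) = a

/-- `Span_ℝ(B)` for a set `B` of monomials. -/
def spanMon {n : ℕ} (B : Set (Fin n →₀ ℕ)) : Submodule ℝ (MP n) :=
  Submodule.span ℝ ((fun a => (monomial a 1 : MP n)) '' B)

/-- The border `∂B = B⁺ \ B` of a set of monomials. -/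
def borderSet {n : ℕ} (B : Set (Fin n →₀ ℕ)) : Set (Fin n →₀ ℕ) :=
  {a | a ∉ B ∧ ∃ i : Fin n, ∃ b ∈ B, a = b + Finsupp.single i 1}

end
/-- If `L` is a linear functional on `ℝ[x]_{2t}` with `M_t(L) ⪰ 0`, then for
every `1 ≤ s ≤ t` one has `Ker M_t(L) ∩ ℝ[x]_s = Ker M_s(L)`. -/
theorem momKer_inter_degLE_of_psd {n t : ℕ} (L : Module.Dual ℝ (MP n))
    (hpsd : momPSD L t) (s : ℕ) (hs1 : 1 ≤ s) (hst : s ≤ t) :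
    momKer L t ∩ {p : MP n | p.totalDegree ≤ s} = momKer L s := by
  ext p
  constructor
  · rintro ⟨⟨_, h⟩, hp⟩
    exact ⟨hp, fun β hβ => h β (hβ.trans hst)⟩
  · rintro ⟨hp, h⟩
    refine ⟨⟨hp.trans hst, fun β hβ => ?_⟩, hp⟩
    have hpp : L (p * p) = 0 := by
      have e : p * p = ∑ v ∈ p.support, coeff v p • (p * monomial v 1) := by
        conv_lhs => rw [p.as_sum, ← p.as_sum]
        conv_lhs => arg 2; rw [p.as_sum]
        rw [Finset.mul_sum]
        refine Finset.sum_congr rfl fun v _ => ?_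
        rw [← mul_smul_comm, smul_monomial, smul_eq_mul, mul_one]
      rw [e, map_sum]
      refine Finset.sum_eq_zero fun v hv => ?_
      rw [map_smul, h v ((le_totalDegree hv).trans hp), smul_zero]
    have key : ∀ c : ℝ, 0 ≤ L (monomial β 1 * monomial β 1) + 2 * c * L (p * monomial β 1) := by
      intro c
      have hd : (monomial β 1 + c • p : MP n).totalDegree ≤ t := by
        refine (totalDegree_add _ _).trans (max_le ?_ ?_)
        · exact (totalDegree_monomial_le β (1 : ℝ)).trans hβ
        · exact (totalDegree_smul_le c p).trans (hp.trans hst)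
      have h0 := hpsd _ hd
      have e : (monomial β 1 + c • p) * (monomial β 1 + c • p)
          = monomial β 1 * monomial β 1 + (2 * c) • (p * monomial β 1) + (c * c) • (p * p) := by
        simp only [smul_eq_C_mul, map_mul, map_ofNat]
        ring
      rw [e, map_add, map_add, map_smul, map_smul, hpp] at h0
      simpa using h0
    by_contra hne
    have h1 := key (-(L (monomial β 1 * monomial β 1) + 1) / (2 * L (p * monomial β 1)))
    field_simp at h1
    linarith
end

section
/- Let Y be a real matrix whose columns are indexed by the monomials of total degree at most s in n variables, and for a monomial a let Y_a denote the corresponding column. Assume that for every choice of real scalars (λ_a) indexed by the monomials of degree at most s−1 and every i ∈ {1,…,n}: if Σ_a λ_a Y_a = 0 then Σ_a λ_a Y_{x_i·a} = 0. Then there exists a set B of monomials of degree at most s, closed under taking divisions, such that the columns {Y_b : b ∈ B} are linearly independent and span the column space of Y (i.e. B indexes a maximal linearly independent set of columns of Y). -/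
open MvPolynomial

/-- Let `Y` be a real matrix whose columns are indexed by the monomials of
degree at most `s` in `n` variables.  If, whenever a linear combination of the columns indexed by
monomials of degree at most `s-1` vanishes, the corresponding combination of the columns shifted
by any variable `xᵢ` also vanishes, then there is a set `B` of monomials of degree at most `s`,
closed under taking divisions, indexing a maximal linearly independent set of columns of `Y`. -/
theorem exists_divClosed_column_basis {n s : ℕ} {R : Type*} (Y : (Fin n →₀ ℕ) → (R → ℝ))
    (hY : ∀ lam : (Fin n →₀ ℕ) →₀ ℝ, (∀ a ∈ lam.support, mdeg a ≤ s - 1) → ∀ i : Fin n,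
      (lam.sum fun a c => c • Y a) = 0 →
      (lam.sum fun a c => c • Y (a + Finsupp.single i 1)) = 0) :
    ∃ B : Set (Fin n →₀ ℕ), (∀ a ∈ B, mdeg a ≤ s) ∧ DivClosed B ∧
      LinearIndependent ℝ (fun b : B => Y ↑b) ∧
      Submodule.span ℝ (Y '' B) = Submodule.span ℝ (Y '' {a | mdeg a ≤ s}) := by
  classical
  set lo : (Fin n →₀ ℕ) → Set (Fin n →₀ ℕ) := fun a => {b | toDegLex b < toDegLex a} with hlo
  have hdeg : ∀ a b : Fin n →₀ ℕ, toDegLex b < toDegLex a → mdeg b ≤ mdeg a := fun a b h =>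
    Finsupp.DegLex.monotone_degree h.le
  have hadd : ∀ (a : Fin n →₀ ℕ) (i : Fin n), mdeg (a + Finsupp.single i 1) = mdeg a + 1 := by
    intro a i
    change (a + Finsupp.single i 1).degree = a.degree + 1
    simp
  let B : Set (Fin n →₀ ℕ) := {a | mdeg a ≤ s ∧ Y a ∉ Submodule.span ℝ (Y '' lo a)}
  have hstep : ∀ (i : Fin n) (a : Fin n →₀ ℕ), a + Finsupp.single i 1 ∈ B → a ∈ B := by
    rintro i a ⟨h1, h2⟩
    rw [hadd] at h1
    refine ⟨by omega, fun h => h2 ?_⟩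
    obtain ⟨l, hl, hla⟩ := (Finsupp.mem_span_image_iff_linearCombination ℝ).1 h
    rw [Finsupp.mem_supported] at hl
    have key := hY (l - Finsupp.single a 1) ?_ i ?_
    · have e : (Finsupp.linearCombination ℝ (fun b => Y (b + Finsupp.single i 1)))
          (l - Finsupp.single a 1) = 0 := key
      rw [map_sub, Finsupp.linearCombination_single, one_smul, sub_eq_zero] at e
      rw [← e, Finsupp.linearCombination_apply]
      refine Submodule.sum_mem _ fun b hb => Submodule.smul_mem _ _ (Submodule.subset_span ?_)
      refine ⟨b + Finsupp.single i 1, ?_, rfl⟩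
      have hb' : toDegLex b < toDegLex a := hl hb
      change toDegLex (b + Finsupp.single i 1) < toDegLex (a + Finsupp.single i 1)
      rw [toDegLex_add, toDegLex_add]
      exact add_lt_add_left hb' _
    · intro b hb
      rcases Finset.mem_union.1 (Finsupp.support_sub hb) with hb | hb
      · have := hdeg a b (hl hb)
        omega
      · have := Finsupp.support_single_subset hb
        rw [Finset.mem_singleton] at this
        subst this
        omega
    · change (Finsupp.linearCombination ℝ Y) (l - Finsupp.single a 1) = 0
      rw [map_sub, Finsupp.linearCombination_single, one_smul, hla, sub_self]
  refine ⟨B, fun a ha => ha.1, ?_, ?_, ?_⟩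
  · have main : ∀ d a : Fin n →₀ ℕ, a + d ∈ B → a ∈ B := by
      intro d
      induction d using Finsupp.induction_linear with
      | zero => intro a h; simpa using h
      | add f g hf hg => intro a h; exact hf _ (hg _ (by rwa [add_assoc]))
      | single i k =>
        induction k with
        | zero => intro a h; simpa using h
        | succ k ih =>
          intro a h
          rw [Finsupp.single_add, ← add_assoc] at h
          exact ih _ (hstep _ _ h)
    intro a ha a' h
    obtain ⟨d, rfl⟩ := exists_add_of_le h
    exact main d a' ha
  · rw [linearIndependent_iff]
    intro l hl
    by_contra hne
    obtain ⟨m, hm, hmax⟩ := Finset.exists_max_image l.support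
      (fun b : B => toDegLex (b : Fin n →₀ ℕ)) (Finsupp.support_nonempty_iff.2 hne)
    apply m.2.2
    rw [Finsupp.linearCombination_apply, Finsupp.sum, ← Finset.add_sum_erase _ _ hm] at hl
    have hmem : l m • Y m ∈ Submodule.span ℝ (Y '' lo m) := by
      rw [eq_neg_of_add_eq_zero_left hl]
      refine Submodule.neg_mem _ (Submodule.sum_mem _ fun b hb =>
        Submodule.smul_mem _ _ (Submodule.subset_span ⟨b, ?_, rfl⟩))
      rw [Finset.mem_erase] at hb
      refine lt_of_le_of_ne (hmax b hb.2) fun h => hb.1 (Subtype.ext (toDegLex_injective h))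
    exact (Submodule.smul_mem_iff _ (Finsupp.mem_support_iff.1 hm)).1 hmem
  · apply le_antisymm
    · exact Submodule.span_mono (Set.image_mono fun a ha => ha.1)
    · rw [Submodule.span_le]
      rintro _ ⟨a, ha, rfl⟩
      have main : ∀ c : DegLex (Fin n →₀ ℕ), mdeg (ofDegLex c) ≤ s →
          Y (ofDegLex c) ∈ Submodule.span ℝ (Y '' B) := by
        intro c
        induction c using WellFoundedLT.induction with
        | ind c ih =>
          intro hc
          by_cases h : Y (ofDegLex c) ∈ Submodule.span ℝ (Y '' lo (ofDegLex c))
          · refine Submodule.span_le.2 ?_ h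
            rintro _ ⟨b, hb, rfl⟩
            exact ih (toDegLex b) hb ((hdeg _ _ hb).trans hc)
          · exact Submodule.subset_span ⟨_, ⟨hc, h⟩, rfl⟩
      exact main (toDegLex a) ha
end

section
/- If L₁ and L₂ are two generic elements of K_{t,⪰}, then Ker M_{⌊t/2⌋}(L₁) = Ker M_{⌊t/2⌋}(L₂); i.e. all generic elements of K_{t,⪰} have the same moment-matrix kernel. -/
open MvPolynomial

theorem mem_ker_momBil {n s : ℕ} (L : Module.Dual ℝ (MP n)) (p : RxT n s) :
    p ∈ LinearMap.ker (momBil L s) ↔ ∀ q : MP n, q.totalDegree ≤ s → L ((p : MP n) * q) = 0 := by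
  rw [LinearMap.mem_ker]
  constructor
  · intro hp q hq
    have := LinearMap.congr_fun hp ⟨q, (mem_restrictTotalDegree _ _ _).2 hq⟩
    simpa [momBil] using this
  · intro hp
    ext q
    have := hp q ((mem_restrictTotalDegree _ _ _).1 q.2)
    simpa [momBil] using this

theorem mem_momKer_iff {n s : ℕ} (L : Module.Dual ℝ (MP n)) (p : MP n) :
    p ∈ momKer L s ↔ p.totalDegree ≤ s ∧
      ∀ q : MP n, q.totalDegree ≤ s → L (p * q) = 0 := by
  refine and_congr_right fun _ => ⟨fun hp q hq => ?_, fun hp β hβ => hp _ ?_⟩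
  · rw [q.as_sum, Finset.mul_sum, map_sum]
    refine Finset.sum_eq_zero fun β hβ => ?_
    have h1 : (monomial β (coeff β q) : MP n) = coeff β q • monomial β 1 := by
      simp [smul_monomial]
    rw [h1, mul_smul_comm, map_smul, hp β ((le_totalDegree hβ).trans hq), smul_zero]
  · rw [totalDegree_monomial _ one_ne_zero]; exact hβ

theorem psd_zero {n s : ℕ} (L : Module.Dual ℝ (MP n)) (hL : momPSD L s) (p q : MP n)
    (hp : p.totalDegree ≤ s) (hq : q.totalDegree ≤ s) (h0 : L (p * p) = 0) : L (p * q) = 0 := by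
  by_contra hne
  set c : ℝ := -(L (q * q) + 1) / (2 * L (p * q)) with hc
  have h1 := hL (q + c • p) ((totalDegree_add _ _).trans
    (max_le hq ((totalDegree_smul_le _ _).trans hp)))
  have h2 : (q + c • p) * (q + c • p) = q * q + (2 * c) • (p * q) + (c * c) • (p * p) := by
    simp only [smul_eq_C_mul, C_mul]
    have : (C (2 : ℝ) : MP n) = 2 := rfl
    rw [this]; ring
  rw [h2] at h1
  simp only [map_add, map_smul, h0, smul_eq_mul] at h1
  have h3 : 2 * c * L (p * q) = -(L (q * q) + 1) := by rw [hc]; field_simp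
  linarith

theorem ker_add_le {n s : ℕ} (L L' : Module.Dual ℝ (MP n)) (hL : momPSD L s) (hL' : momPSD L' s) :
    LinearMap.ker (momBil (L + L') s) ≤ LinearMap.ker (momBil L s) := by
  intro p hp
  rw [mem_ker_momBil] at hp ⊢
  have hd : (p : MP n).totalDegree ≤ s := (mem_restrictTotalDegree _ _ _).1 p.2
  intro q hq
  refine psd_zero L hL p q hd hq ?_
  have h1 := hp p hd
  have h2 := hL p hd
  have h3 := hL' p hd
  rw [LinearMap.add_apply] at h1
  linarith

theorem ker_eq_add {n m t : ℕ} (h : Fin m → MP n)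
    (L L' : Module.Dual ℝ (MP n)) (h₁ : Generic h t L) (h₂ : L' ∈ Kpos h t) :
    LinearMap.ker (momBil (L + L') (t / 2)) = LinearMap.ker (momBil L (t / 2)) := by
  have hK : L + L' ∈ Kpos h t := by
    refine ⟨fun g hg => ?_, fun p hp => ?_⟩
    · simp [h₁.1.1 g hg, h₂.1 g hg]
    · exact add_nonneg (h₁.1.2 p hp) (h₂.2 p hp)
  refine Submodule.eq_of_le_of_finrank_le (ker_add_le L L' h₁.1.2 h₂.2) ?_
  have h3 := h₁.2 _ hK
  unfold momRank at h3
  have h4 := (momBil L (t / 2)).finrank_range_add_finrank_ker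
  have h5 := (momBil (L + L') (t / 2)).finrank_range_add_finrank_ker
  omega

/-- Any two generic elements of `K_{t,⪰}` have the same moment-matrix kernel. -/
theorem momKer_eq_of_generic {n m t : ℕ} (h : Fin m → MP n)
    (L₁ L₂ : Module.Dual ℝ (MP n)) (h₁ : Generic h t L₁) (h₂ : Generic h t L₂) :
    momKer L₁ (t / 2) = momKer L₂ (t / 2) := by
  have hk : LinearMap.ker (momBil L₁ (t / 2)) = LinearMap.ker (momBil L₂ (t / 2)) := by
    rw [← ker_eq_add h L₁ L₂ h₁ h₂.1, ← ker_eq_add h L₂ L₁ h₂ h₁.1, add_comm]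
  ext p
  rw [mem_momKer_iff, mem_momKer_iff]
  refine and_congr_right fun hp => ?_
  have h3 := mem_ker_momBil L₁ (⟨p, (mem_restrictTotalDegree _ _ _).2 hp⟩ : RxT n (t / 2))
  have h4 := mem_ker_momBil L₂ (⟨p, (mem_restrictTotalDegree _ _ _).2 hp⟩ : RxT n (t / 2))
  rw [← h3, ← h4, hk]
end

section
/- The dimension of the cone K_{t,⪰} (i.e. the dimension of its linear span inside (ℝ[x]_t)*) equals the dimension of (H_t ∪ W_t)^⊥, the space of linear functionals on ℝ[x]_t vanishing on H_t ∪ W_t. -/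
open MvPolynomial

theorem aux_bound {V : Type*} [AddCommGroup V] [Module ℝ V] [FiniteDimensional ℝ V]
    (B A : LinearMap.BilinForm ℝ V) (hs : ∀ x, 0 ≤ B x x) (hB : ∀ x y, B x y = B y x)
    (hA : ∀ x y, A x y = A y x) (hk : ∀ x, B x = 0 → A x = 0) :
    ∃ c : ℝ, 0 ≤ c ∧ ∀ v, - (c * B v v) ≤ A v v := by
  have hsymm : LinearMap.IsSymm B := ⟨fun x y => by simpa using hB x y⟩
  obtain ⟨e, he⟩ := LinearMap.BilinForm.exists_orthogonal_basis hsymm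
  have hBe : ∀ i v, B (e i) v = e.repr v i * B (e i) (e i) := by
    intro i v
    conv_lhs => rw [← e.sum_repr v]
    rw [map_sum, Finset.sum_eq_single i]
    · simp
    · intro j _ hj
      have : B (e i) (e j) = 0 := he hj.symm
      simp [this]
    · simp
  have hz : ∀ i, B (e i) (e i) = 0 → A (e i) = 0 := by
    intro i hi
    apply hk
    ext v
    rw [hBe, hi]; simp
  have hsq : ∀ i v, B (e i) (e i) ≠ 0 → (e.repr v i)^2 ≤ (B (e i) (e i))⁻¹ * B v v := by
    intro i v hi
    have hpos : 0 < B (e i) (e i) := lt_of_le_of_ne (hs _) (Ne.symm hi)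
    have h1 := LinearMap.BilinForm.apply_sq_le_of_symm B hs hsymm (e i) v
    rw [hBe] at h1
    have h2 : B (e i) (e i) * (e.repr v i)^2 ≤ B v v := by
      refine le_of_mul_le_mul_left ?_ hpos
      nlinarith
    rw [← div_eq_inv_mul, le_div_iff₀ hpos]
    linarith
  have hinv : ∀ i, 0 ≤ (B (e i) (e i))⁻¹ := fun i => inv_nonneg.2 (hs _)
  refine ⟨∑ i, ∑ j, |A (e i) (e j)| * ((B (e i) (e i))⁻¹ + (B (e j) (e j))⁻¹), ?_, ?_⟩
  · refine Finset.sum_nonneg fun i _ => Finset.sum_nonneg fun j _ => ?_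
    exact mul_nonneg (abs_nonneg _) (add_nonneg (hinv i) (hinv j))
  · intro v
    have hexp : A v v = ∑ i, ∑ j, e.repr v i * (e.repr v j * A (e i) (e j)) := by
      conv_lhs => rw [← e.sum_repr v]
      simp only [map_sum, LinearMap.sum_apply, map_smul, LinearMap.smul_apply, smul_eq_mul,
        Finset.mul_sum]
      exact Finset.sum_congr rfl fun i _ => Finset.sum_congr rfl fun j _ => by
        rw [hA (e j) (e i)]
    rw [hexp, Finset.sum_mul, ← Finset.sum_neg_distrib]
    refine Finset.sum_le_sum fun i _ => ?_
    rw [Finset.sum_mul, ← Finset.sum_neg_distrib]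
    refine Finset.sum_le_sum fun j _ => ?_
    by_cases hi : B (e i) (e i) = 0
    · simp [hz i hi]
    by_cases hj : B (e j) (e j) = 0
    · simp [hA (e i) (e j), hz j hj]
    have h1 := hsq i v hi
    have h2 := hsq j v hj
    have h3 : |e.repr v i * e.repr v j| ≤
        ((B (e i) (e i))⁻¹ + (B (e j) (e j))⁻¹) * B v v := by
      rw [abs_le]
      constructor <;> nlinarith [sq_nonneg (e.repr v i + e.repr v j),
        sq_nonneg (e.repr v i - e.repr v j), sq_nonneg (e.repr v i), sq_nonneg (e.repr v j)]
    have h4 := neg_abs_le (e.repr v i * e.repr v j * A (e i) (e j))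
    rw [abs_mul] at h4
    have h5 := mul_le_mul_of_nonneg_right h3 (abs_nonneg (A (e i) (e j)))
    linarith

theorem aux_mul_zero {n s : ℕ} (L : Module.Dual ℝ (MP n)) (g q : MP n)
    (hq : q.totalDegree ≤ s)
    (hg : ∀ β : Fin n →₀ ℕ, mdeg β ≤ s → L (g * monomial β 1) = 0) : L (g * q) = 0 := by
  rw [q.as_sum, Finset.mul_sum, map_sum]
  refine Finset.sum_eq_zero fun β hβ => ?_
  have h1 : mdeg β ≤ s := (le_totalDegree hβ).trans hq
  have h2 : (monomial β (coeff β q) : MP n) = coeff β q • monomial β 1 := by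
    simp [smul_monomial]
  rw [h2, mul_smul_comm, map_smul, hg β h1, smul_zero]

theorem momBil_apply {n s : ℕ} (L : Module.Dual ℝ (MP n)) (p q : RxT n s) :
    momBil L s p q = L ((p : MP n) * (q : MP n)) := rfl

theorem momKer_iff {n s : ℕ} (L : Module.Dual ℝ (MP n)) (p : RxT n s) :
    (p : MP n) ∈ momKer L s ↔ momBil L s p = 0 := by
  constructor
  · intro hp
    ext q
    rw [momBil_apply]
    exact aux_mul_zero L _ _ ((mem_restrictTotalDegree _ _ _).1 q.2) hp.2
  · intro hp
    refine ⟨(mem_restrictTotalDegree _ _ _).1 p.2, fun β hβ => ?_⟩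
    have hm : (monomial β 1 : MP n) ∈ RxT n s := by
      rw [mem_restrictTotalDegree, totalDegree_monomial _ one_ne_zero]
      exact hβ
    exact congrArg (fun f => f ⟨_, hm⟩) hp

theorem momBil_null {n s : ℕ} (L : Module.Dual ℝ (MP n)) (hL : momPSD L s) (p : RxT n s)
    (h0 : L ((p : MP n) * (p : MP n)) = 0) : momBil L s p = 0 := by
  ext q
  have h1 := LinearMap.BilinForm.apply_sq_le_of_symm (momBil L s)
    (fun x => hL x ((mem_restrictTotalDegree _ _ _).1 x.2))
    ⟨fun x y => by simp [momBil_apply, mul_comm]⟩ p q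
  rw [momBil_apply L p p, h0, zero_mul] at h1
  simpa using le_antisymm h1 (sq_nonneg _)

theorem Kpos_add {n m t : ℕ} (h : Fin m → MP n) {L L' : Module.Dual ℝ (MP n)}
    (hL : L ∈ Kpos h t) (hL' : L' ∈ Kpos h t) : L + L' ∈ Kpos h t := by
  refine ⟨fun g hg => ?_, fun p hp => ?_⟩
  · simp [hL.1 g hg, hL'.1 g hg]
  · exact add_nonneg (hL.2 p hp) (hL'.2 p hp)

theorem ker_le {n m t : ℕ} (h : Fin m → MP n) {Ls L : Module.Dual ℝ (MP n)}
    (hgen : Generic h t Ls) (hL : L ∈ Kpos h t) :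
    LinearMap.ker (momBil Ls (t / 2)) ≤ LinearMap.ker (momBil L (t / 2)) := by
  have hsum := Kpos_add h hgen.1 hL
  have key : ∀ p ∈ LinearMap.ker (momBil (Ls + L) (t / 2)),
      momBil Ls (t / 2) p = 0 ∧ momBil L (t / 2) p = 0 := by
    intro p hp
    have h0 : (Ls + L) ((p : MP n) * (p : MP n)) = 0 := by
      rw [← momBil_apply, LinearMap.mem_ker.1 hp]; rfl
    have hd := (mem_restrictTotalDegree _ _ _).1 p.2
    have h1 := hgen.1.2 p hd
    have h2 := hL.2 p hd
    rw [LinearMap.add_apply] at h0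
    exact ⟨momBil_null Ls hgen.1.2 p (by linarith), momBil_null L hL.2 p (by linarith)⟩
  have hr := hgen.2 _ hsum
  unfold momRank at hr
  have e1 := LinearMap.finrank_range_add_finrank_ker (momBil Ls (t / 2))
  have e2 := LinearMap.finrank_range_add_finrank_ker (momBil (Ls + L) (t / 2))
  have hle : LinearMap.ker (momBil (Ls + L) (t / 2)) ≤ LinearMap.ker (momBil Ls (t / 2)) :=
    fun p hp => (key p hp).1
  have heq := Submodule.eq_of_le_of_finrank_le hle (by omega)
  rw [← heq]
  exact fun p hp => (key p hp).2

theorem span_Kpos_eq {n m t : ℕ} (h : Fin m → MP n)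
    (Ls : Module.Dual ℝ (MP n)) (hgen : Generic h t Ls) :
    Submodule.span ℝ (Kpos h t) = annih (Hset h t ∪ Wset h t Ls) := by
  apply le_antisymm
  · rw [Submodule.span_le]
    intro L hL
    have : Submodule.span ℝ (Hset h t ∪ Wset h t Ls) ≤ LinearMap.ker L := by
      rw [Submodule.span_le]
      rintro p (hp | ⟨α, g, hα, hg, rfl⟩)
      · exact hL.1 p hp
      · have hgm : g ∈ RxT n (t / 2) := (mem_restrictTotalDegree _ _ _).2 hg.1
        have h1 := (momKer_iff Ls ⟨g, hgm⟩).1 hg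
        have h2 := (momKer_iff L ⟨g, hgm⟩).2 (ker_le h hgen hL h1)
        have h3 := h2.2 α hα
        rw [mul_comm] at h3
        exact h3
    exact (Submodule.mem_dualAnnihilator L).2 fun w hw => this hw
  · intro L hL
    have hL' := (Submodule.mem_dualAnnihilator L).1 hL
    obtain ⟨c, hc, hb⟩ := aux_bound (momBil Ls (t / 2)) (momBil L (t / 2))
      (fun x => hgen.1.2 x ((mem_restrictTotalDegree _ _ _).1 x.2))
      (fun x y => by simp [momBil_apply, mul_comm]) (fun x y => by simp [momBil_apply, mul_comm])
      (fun p hp => by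
        rw [← momKer_iff] at hp ⊢
        refine ⟨hp.1, fun β hβ => ?_⟩
        rw [mul_comm]
        exact hL' _ (Submodule.subset_span (Or.inr ⟨β, p, hβ, hp, rfl⟩)))
    have hmem : c • Ls + L ∈ Kpos h t := by
      refine ⟨fun g hg => ?_, fun p hp => ?_⟩
      · have := hL' g (Submodule.subset_span (Or.inl hg))
        simp [this, hgen.1.1 g hg]
      · have h1 := hb ⟨p, (mem_restrictTotalDegree _ _ _).2 hp⟩
        simp only [momBil_apply] at h1
        simp only [LinearMap.add_apply, LinearMap.smul_apply, smul_eq_mul]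
        linarith
    have : L = (c • Ls + L) - c • Ls := by abel
    rw [this]
    exact Submodule.sub_mem _ (Submodule.subset_span hmem)
      (Submodule.smul_mem _ _ (Submodule.subset_span hgen.1))

/-- The dimension of the cone `K_{t,⪰}` (the dimension of its linear span
inside `(ℝ[x]_t)*`) equals the dimension of `(H_t ∪ W_t)^⊥` (inside `(ℝ[x]_t)*`). -/
theorem dim_Kpos_eq_dim_annih {n m t : ℕ} (h : Fin m → MP n)
    (Lstar : Module.Dual ℝ (MP n)) (hgen : Generic h t Lstar) :
    Module.finrank ℝ (Submodule.map (projDual n t) (Submodule.span ℝ (Kpos h t))) =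
      Module.finrank ℝ
        (Submodule.map (projDual n t) (annih (Hset h t ∪ Wset h t Lstar))) := by
  rw [span_Kpos_eq h Lstar hgen]
end

section
/- Let I = (h₁,…,h_m) be an ideal in ℝ[x], let 1 ≤ s ≤ t, and let G ⊆ ℝ[x]_t be a set of polynomials with h₁,…,h_m ∈ G and G ⊆ I. If every linear functional on ℝ[x]_t vanishing on G restricts to the zero functional on ℝ[x]_s (i.e. dim π_s(G^⊥) = 0), then the complex variety V_ℂ(I) is empty. -/
open MvPolynomial

/-- If `G ⊆ ℝ[x]_t` contains the generators `h₁,…,h_m` of `I`, `G ⊆ I`, and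
every linear functional vanishing on `G` restricts to zero on `ℝ[x]_s` (`dim π_s(G^⊥) = 0`),
then the complex variety `V_ℂ(I)` is empty. -/
theorem complexVariety_empty_of_dimProj_zero {n m s t : ℕ} (h : Fin m → MP n)
    (hs1 : 1 ≤ s) (hst : s ≤ t) (G : Set (MP n)) (hGdeg : ∀ g ∈ G, g.totalDegree ≤ t)
    (hhG : ∀ j, h j ∈ G) (hGI : G ⊆ (Ideal.span (Set.range h) : Set (MP n)))
    (hzero : ∀ L : Module.Dual ℝ (MP n), (∀ g ∈ G, L g = 0) →
      ∀ p : MP n, p.totalDegree ≤ s → L p = 0) :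
    {v : Fin n → ℂ | ∀ j, aeval v (h j) = 0} = ∅ := by
  rw [Set.eq_empty_iff_forall_notMem]
  intro v hv
  have hI : Ideal.span (Set.range h) ≤ RingHom.ker (aeval v : MP n →ₐ[ℝ] ℂ) := by
    rw [Ideal.span_le]
    rintro _ ⟨j, rfl⟩
    exact hv j
  have key := hzero (Complex.reLm ∘ₗ (aeval v : MP n →ₐ[ℝ] ℂ).toLinearMap)
    (fun g hg => by
      have h0 : aeval v g = 0 := hI (hGI hg)
      simp [h0]) 1 (by simp)
  simp at key
end

section
/- Let I = (h₁,…,h_m) be an ideal in ℝ[x], let 1 ≤ s ≤ t, and let G ⊆ ℝ[x]_t be a set of polynomials with h₁,…,h_m ∈ G and G ⊆ √[ℝ]I. If every linear functional on ℝ[x]_t vanishing on G restricts to the zero functional on ℝ[x]_s (i.e. dim π_s(G^⊥) = 0), then the real variety V_ℝ(I) is empty. -/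
open MvPolynomial

/-- If `G ⊆ ℝ[x]_t` contains the generators `h₁,…,h_m` of `I`, `G ⊆ √[ℝ]I`,
and every linear functional vanishing on `G` restricts to zero on `ℝ[x]_s`
(`dim π_s(G^⊥) = 0`), then the real variety `V_ℝ(I)` is empty. -/
theorem realVariety_empty_of_dimProj_zero {n m s t : ℕ} (h : Fin m → MP n)
    (hs1 : 1 ≤ s) (hst : s ≤ t) (G : Set (MP n)) (hGdeg : ∀ g ∈ G, g.totalDegree ≤ t)
    (hhG : ∀ j, h j ∈ G) (hGI : G ⊆ realRad (Ideal.span (Set.range h)))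
    (hzero : ∀ L : Module.Dual ℝ (MP n), (∀ g ∈ G, L g = 0) →
      ∀ p : MP n, p.totalDegree ≤ s → L p = 0) :
    {v : Fin n → ℝ | ∀ j, eval v (h j) = 0} = ∅ := by
  rw [Set.eq_empty_iff_forall_notMem]
  intro v hv
  have hI : ∀ p ∈ Ideal.span (Set.range h), eval v p = 0 := by
    intro p hp
    have hle : Ideal.span (Set.range h) ≤ RingHom.ker (eval v) := by
      rw [Ideal.span_le]
      rintro _ ⟨j, rfl⟩
      exact hv j
    exact hle hp
  have hL := hzero (aeval v : MP n →ₐ[ℝ] ℝ).toLinearMap (by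
    intro g hg
    obtain ⟨k, hk, r, q, hq⟩ := hGI hg
    have h0 := hI _ hq
    simp only [map_add, map_pow, map_sum] at h0
    have h1 : 0 ≤ (eval v g) ^ (2 * k) := by rw [pow_mul]; positivity
    have h2 : 0 ≤ ∑ j, (eval v (q j)) ^ 2 := Finset.sum_nonneg fun j _ => sq_nonneg _
    have h3 : (eval v g) ^ (2 * k) = 0 := by linarith
    have h4 : eval v g = 0 := pow_eq_zero_iff (by omega) |>.mp h3
    simpa [aeval_eq_eval] using h4) 1 (by simp)
  simp at hL
end

section
/- Let I = (h₁,…,h_m) be an ideal in ℝ[x] with D = max_j deg(h_j), let D ≤ s ≤ t, and let G ⊆ ℝ[x]_t with h₁,…,h_m ∈ G and G ⊆ √[ℝ]I. Assume dim π_s(G^⊥) = dim π_{s−1}(G^⊥) and dim π_s(G^⊥) = dim π_s((G^+)^⊥). Then there exists a set B of monomials of degree at most s−1, closed under taking divisions, such that ℝ[x]_s = Span_ℝ(B) ⊕ (ℝ[x]_s ∩ Span_ℝ(G)) is a direct sum decomposition of vector spaces. -/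
open MvPolynomial

theorem aux_mdeg {n : ℕ} (a : Fin n →₀ ℕ) : mdeg a = a.degree := rfl

theorem aux_mem {n s : ℕ} {p : MP n} : p ∈ RxT n s ↔ ∀ b ∈ p.support, mdeg b ≤ s := Iff.rfl

theorem aux_plus {n s : ℕ} {G : Set (MP n)} (hdim2 : dimProj s G = dimProj s (plusOp G))
    {p : MP n} (hp : p ∈ RxT n s) (hpG : p ∈ Submodule.span ℝ (plusOp G)) :
    p ∈ Submodule.span ℝ G := by
  by_contra hne
  obtain ⟨f, hf, hk⟩ := Submodule.exists_le_ker_of_notMem hne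
  have hle : Submodule.map (projDual n s) (annih (plusOp G)) ≤
      Submodule.map (projDual n s) (annih G) :=
    Submodule.map_mono (Submodule.dualAnnihilator_anti
      (Submodule.span_mono Set.subset_union_left))
  have heq := Submodule.eq_of_le_of_finrank_eq hle hdim2.symm
  have hfm : projDual n s f ∈ Submodule.map (projDual n s) (annih G) :=
    ⟨f, (Submodule.mem_dualAnnihilator f).2 fun w hw => hk hw, rfl⟩
  rw [← heq] at hfm
  obtain ⟨f', hf', he⟩ := hfm
  have h1 : f' p = f p := congrArg (fun g => g ⟨p, hp⟩) he
  exact hf (h1 ▸ (Submodule.mem_dualAnnihilator f').1 hf' p hpG)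

theorem aux_lin {V W : Type*} [AddCommGroup V] [Module ℝ V] [FiniteDimensional ℝ V]
    [AddCommGroup W] [Module ℝ W] (r : V →ₗ[ℝ] W) (S : Submodule ℝ V)
    (hS : Module.finrank ℝ S = Module.finrank ℝ (Submodule.map r S)) {x : V} (hx : x ∈ S)
    (h0 : r x = 0) : x = 0 := by
  have h1 := LinearMap.finrank_range_add_finrank_ker (r.domRestrict S)
  rw [LinearMap.range_domRestrict] at h1
  have h3 : LinearMap.ker (r.domRestrict S) = ⊥ := Submodule.finrank_eq_zero.1 (by omega)
  have h4 : (⟨x, hx⟩ : S) ∈ LinearMap.ker (r.domRestrict S) := h0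
  rw [h3, Submodule.mem_bot] at h4
  exact congrArg Subtype.val h4

theorem aux_proj {n s : ℕ} {G : Set (MP n)} (hdim1 : dimProj s G = dimProj (s - 1) G)
    {p : MP n} (hp : p ∈ RxT n s) :
    p ∈ RxT n (s - 1) ⊔ Submodule.span ℝ G := by
  by_contra hne
  obtain ⟨f, hf, hk⟩ := Submodule.exists_le_ker_of_notMem hne
  have hle : RxT n (s - 1) ≤ RxT n s := by
    intro q hq b hb
    exact (hq hb).trans (Nat.sub_le _ _)
  let r : Module.Dual ℝ (RxT n s) →ₗ[ℝ] Module.Dual ℝ (RxT n (s - 1)) :=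
    (Submodule.inclusion hle).dualMap
  have hcomp : r ∘ₗ projDual n s = projDual n (s - 1) := rfl
  have hfm : projDual n s f ∈ Submodule.map (projDual n s) (annih G) :=
    ⟨f, (Submodule.mem_dualAnnihilator f).2 fun w hw =>
      hk (Submodule.mem_sup_right hw), rfl⟩
  have h4 : r (projDual n s f) = 0 := by
    ext q
    exact hk (Submodule.mem_sup_left q.2)
  have h6 : Submodule.map r (Submodule.map (projDual n s) (annih G)) =
      Submodule.map (projDual n (s - 1)) (annih G) := by
    rw [← Submodule.map_comp, hcomp]
  have h5 : projDual n s f = 0 := by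
    refine aux_lin r _ ?_ hfm h4
    rw [h6]
    exact hdim1
  exact hf (congrArg (fun g => g ⟨p, hp⟩) h5)

/-- `a` is the leading exponent of an element of `N`. -/
def IsLead {n : ℕ} (N : Submodule ℝ (MP n)) (a : Fin n →₀ ℕ) : Prop :=
  ∃ p ∈ N, coeff a p ≠ 0 ∧ ∀ b ∈ p.support, toDegLex b ≤ toDegLex a

theorem aux_degle {n : ℕ} {a b : Fin n →₀ ℕ} (hab : toDegLex a ≤ toDegLex b) :
    mdeg a ≤ mdeg b := Finsupp.DegLex.monotone_degree hab

theorem aux_step {n s : ℕ} {G : Set (MP n)} (hdim2 : dimProj s G = dimProj s (plusOp G))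
    (a : Fin n →₀ ℕ) (i : Fin n) (hs : mdeg (Finsupp.single i 1 + a) ≤ s)
    (ha : IsLead (RxT n s ⊓ Submodule.span ℝ G) a) :
    IsLead (RxT n s ⊓ Submodule.span ℝ G) (Finsupp.single i 1 + a) := by
  obtain ⟨p, ⟨hp1, hp2⟩, hpa, hpl⟩ := ha
  have hlead : ∀ b ∈ (X i * p).support, toDegLex b ≤ toDegLex (Finsupp.single i 1 + a) := by
    intro b hb
    rw [support_X_mul] at hb
    obtain ⟨c, hc, rfl⟩ := Finset.mem_map.1 hb
    exact add_le_add_right (hpl c hc) (toDegLex (Finsupp.single i 1))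
  have hX : X i * p ∈ RxT n s := fun b hb => (aux_degle (hlead b hb)).trans hs
  refine ⟨X i * p, ⟨hX, aux_plus hdim2 hX ?_⟩, by rwa [coeff_X_mul], hlead⟩
  have : Submodule.span ℝ G ≤
      (Submodule.span ℝ (plusOp G)).comap (LinearMap.mulLeft ℝ (X i : MP n)) := by
    rw [Submodule.span_le]
    intro g hg
    exact Submodule.subset_span (Or.inr (Set.mem_iUnion.2 ⟨i, g, hg, rfl⟩))
  exact this hp2

theorem aux_up {n s : ℕ} {G : Set (MP n)} (hdim2 : dimProj s G = dimProj s (plusOp G))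
    (k : ℕ) : ∀ (a c : Fin n →₀ ℕ), c.degree = k → mdeg (a + c) ≤ s →
    IsLead (RxT n s ⊓ Submodule.span ℝ G) a →
    IsLead (RxT n s ⊓ Submodule.span ℝ G) (a + c) := by
  induction k with
  | zero =>
    intro a c hc _ h
    rw [Finsupp.degree_eq_zero_iff] at hc
    simpa [hc] using h
  | succ k ih =>
    intro a c hc hs h
    have hc0 : c ≠ 0 := by rintro rfl; simp at hc
    obtain ⟨i, hi⟩ := Finsupp.ne_iff.1 hc0
    have hle : Finsupp.single i 1 ≤ c := by
      rw [Finsupp.single_le_iff]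
      exact Nat.one_le_iff_ne_zero.2 hi
    obtain ⟨d, rfl⟩ := exists_add_of_le hle
    have e : a + (Finsupp.single i 1 + d) = Finsupp.single i 1 + (a + d) := by abel
    rw [e] at hs ⊢
    simp only [map_add, Finsupp.degree_single] at hc
    refine aux_step hdim2 _ i hs (ih a d (by omega) ?_ h)
    simp only [aux_mdeg, map_add, Finsupp.degree_single] at hs ⊢
    omega

theorem exists_divClosed_complement {n m s t : ℕ} (h : Fin m → MP n)
    (hD : ∀ j, (h j).totalDegree ≤ s) (hst : s ≤ t)
    (G : Set (MP n)) (hGdeg : ∀ g ∈ G, g.totalDegree ≤ t)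
    (hhG : ∀ j, h j ∈ G) (hGI : G ⊆ realRad (Ideal.span (Set.range h)))
    (hdim1 : dimProj s G = dimProj (s - 1) G)
    (hdim2 : dimProj s G = dimProj s (plusOp G)) :
    ∃ B : Set (Fin n →₀ ℕ), (∀ a ∈ B, mdeg a ≤ s - 1) ∧ DivClosed B ∧
      spanMon B ⊓ (RxT n s ⊓ Submodule.span ℝ G) = ⊥ ∧
      spanMon B ⊔ (RxT n s ⊓ Submodule.span ℝ G) = RxT n s := by
  set N := RxT n s ⊓ Submodule.span ℝ G with hN
  have hspan : ∀ B : Set (Fin n →₀ ℕ), spanMon B = restrictSupport ℝ B :=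
    fun B => (restrictSupport_eq_span ℝ B).symm
  refine ⟨{a | mdeg a ≤ s ∧ ¬ IsLead N a}, ?_, ?_, ?_, ?_⟩
  · rintro a ⟨has, hal⟩
    by_contra hlt
    apply hal
    have hmon : (monomial a 1 : MP n) ∈ RxT n s := by
      refine aux_mem.2 fun b hb => ?_
      rw [mem_support_iff, coeff_monomial] at hb
      have : a = b := by by_contra hne; simp [hne] at hb
      exact this ▸ has
    obtain ⟨r, hr, g, hg, hrg⟩ := Submodule.mem_sup.1 (aux_proj hdim1 hmon)
    have hge : g = monomial a 1 - r := by rw [← hrg]; ring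
    have hle : RxT n (s - 1) ≤ RxT n s := by
      intro q hq b hb
      exact (hq hb).trans (Nat.sub_le _ _)
    have hra : coeff a r = 0 := by
      by_contra hne
      exact hlt (hr (mem_support_iff.2 hne))
    refine ⟨g, ⟨hge ▸ sub_mem hmon (hle hr), hg⟩, by simp [hge, hra], ?_⟩
    intro b hb
    rcases eq_or_ne b a with rfl | hba
    · exact le_rfl
    have hbr : b ∈ r.support := by
      rw [mem_support_iff] at hb ⊢
      rw [hge, coeff_sub, coeff_monomial, if_neg hba.symm] at hb
      intro h0
      simp [h0] at hb
    have h1 : mdeg b ≤ s - 1 := hr hbr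
    exact Finsupp.DegLex.le_iff.2 (Or.inl (lt_of_le_of_lt h1 (not_le.1 hlt)))
  · rintro a ⟨has, hal⟩ a' ha'
    obtain ⟨c, rfl⟩ := exists_add_of_le ha'
    refine ⟨le_trans ?_ has, fun hl => hal (aux_up hdim2 _ a' c rfl has hl)⟩
    simp [aux_mdeg]
  · rw [eq_bot_iff]
    rintro p ⟨hp1, hp2⟩
    rw [SetLike.mem_coe, hspan] at hp1
    rw [Submodule.mem_bot]
    by_contra hp0
    obtain ⟨a, ha, hmax⟩ := Finset.exists_max_image p.support toDegLex
      (support_nonempty.2 hp0)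
    exact (hp1 ha).2 ⟨p, hp2, mem_support_iff.1 ha, hmax⟩
  · apply le_antisymm
    · refine sup_le ?_ inf_le_left
      rw [hspan]
      intro p hp b hb
      exact (hp hb).1
    · set B := {a | mdeg a ≤ s ∧ ¬ IsLead N a} with hB
      have key : ∀ a : DegLex (Fin n →₀ ℕ), mdeg (ofDegLex a) ≤ s →
          (monomial (ofDegLex a) 1 : MP n) ∈ spanMon B ⊔ N := by
        intro a
        induction a using WellFoundedLT.induction with
        | ind a ih =>
          intro has
          by_cases hl : IsLead N (ofDegLex a)
          · obtain ⟨p, hpN, hpa, hpl⟩ := hl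
            have hsum := p.as_sum
            rw [← Finset.add_sum_erase _ _ (mem_support_iff.2 hpa)] at hsum
            have hrest : ∑ b ∈ p.support.erase (ofDegLex a), monomial b (coeff b p)
                ∈ spanMon B ⊔ N := by
              refine Submodule.sum_mem _ fun b hb => ?_
              have hb2 := hpl b (Finset.mem_of_mem_erase hb)
              have hb3 : toDegLex b < a :=
                lt_of_le_of_ne hb2 fun e => Finset.ne_of_mem_erase hb (congrArg ofDegLex e)
              have := ih (toDegLex b) hb3 ((aux_degle hb2).trans has)
              have e : (monomial b (coeff b p) : MP n) = coeff b p • monomial b 1 := by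
                rw [smul_monomial]; simp
              rw [e]
              exact Submodule.smul_mem _ _ this
            have hm : (monomial (ofDegLex a) (coeff (ofDegLex a) p) : MP n) ∈ spanMon B ⊔ N := by
              rw [eq_sub_iff_add_eq.2 hsum.symm]
              exact sub_mem (Submodule.mem_sup_right hpN) hrest
            have e : (monomial (ofDegLex a) 1 : MP n) =
                (coeff (ofDegLex a) p)⁻¹ • monomial (ofDegLex a) (coeff (ofDegLex a) p) := by
              rw [smul_monomial, smul_eq_mul, inv_mul_cancel₀ hpa]
            rw [e]
            exact Submodule.smul_mem _ _ hm
          · exact Submodule.mem_sup_left (Submodule.subset_span ⟨_, ⟨has, hl⟩, rfl⟩)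
      intro p hp
      rw [p.as_sum]
      refine Submodule.sum_mem _ fun b hb => ?_
      have e : (monomial b (coeff b p) : MP n) = coeff b p • monomial b 1 := by
        rw [smul_monomial]; simp
      rw [e]
      exact Submodule.smul_mem _ _ (key (toDegLex b) (hp hb))
end

section
/- Let 1 ≤ s ≤ t and let G = H_t ∪ W_t. If dim π_s(G^⊥) = dim π_{s−1}(G^⊥), then rank M_s(L) = rank M_{s−1}(L) for every L ∈ K_{t+2s,⪰}. -/
open MvPolynomial

section Helpers

theorem aux_inj1 {A B : Type*} [AddCommGroup A] [Module ℝ A] [AddCommGroup B] [Module ℝ B]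
    [FiniteDimensional ℝ A] (ρ : A →ₗ[ℝ] B) (V : Submodule ℝ A)
    (h : Module.finrank ℝ V = Module.finrank ℝ (V.map ρ)) (x : A) (hx : x ∈ V) (h0 : ρ x = 0) :
    x = 0 := by
  have r1 := LinearMap.finrank_range_add_finrank_ker (ρ.domRestrict V)
  rw [LinearMap.range_domRestrict] at r1
  have hk : LinearMap.ker (ρ.domRestrict V) = ⊥ := by
    apply Submodule.finrank_eq_zero.1
    omega
  have hz : (⟨x, hx⟩ : V) ∈ LinearMap.ker (ρ.domRestrict V) := h0
  rw [hk, Submodule.mem_bot] at hz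
  exact congrArg Subtype.val hz

theorem aux_inj2 {A B : Type*} [AddCommGroup A] [Module ℝ A] [AddCommGroup B] [Module ℝ B]
    (ρ : A →ₗ[ℝ] B) (V : Submodule ℝ A) (h : ∀ x ∈ V, ρ x = 0 → x = 0) :
    Module.finrank ℝ V = Module.finrank ℝ (V.map ρ) := by
  rw [← LinearMap.range_domRestrict]
  symm
  apply LinearMap.finrank_range_of_inj
  rw [← LinearMap.ker_eq_bot, LinearMap.ker_eq_bot']
  intro x hx
  exact Subtype.ext (h x x.2 hx)

theorem aux_monomial_deg {n : ℕ} (β : Fin n →₀ ℕ) : (monomial β (1 : ℝ) : MP n).totalDegree = mdeg β := by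
  rw [totalDegree_monomial _ one_ne_zero]; rfl

theorem aux_mdeg_add {n : ℕ} (α β : Fin n →₀ ℕ) : mdeg (α + β) = mdeg α + mdeg β := by
  unfold mdeg
  exact Finsupp.sum_add_index' (fun _ => rfl) (fun _ _ _ => rfl)

theorem aux_ext {n : ℕ} (L : Module.Dual ℝ (MP n)) (d : ℕ) (g : MP n)
    (hg : ∀ β : Fin n →₀ ℕ, mdeg β ≤ d → L (g * monomial β 1) = 0)
    (q : MP n) (hq : q.totalDegree ≤ d) : L (g * q) = 0 := by
  rw [q.as_sum, Finset.mul_sum, map_sum]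
  refine Finset.sum_eq_zero fun β hβ => ?_
  have h1 : (monomial β (coeff β q) : MP n) = coeff β q • monomial β 1 := by
    rw [smul_monomial]; simp
  rw [h1, mul_smul_comm, map_smul, hg β ((le_totalDegree hβ).trans hq), smul_zero]

theorem aux_psd {n : ℕ} (L : Module.Dual ℝ (MP n)) (d : ℕ) (hL : momPSD L d) (g q : MP n)
    (hg : g.totalDegree ≤ d) (hq : q.totalDegree ≤ d) (h0 : L (g * g) = 0) : L (g * q) = 0 := by
  by_contra hne
  set x : ℝ := -(L (q * q) + 1) / (2 * L (g * q)) with hx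
  have hmem : x • g + q ∈ RxT n d := by
    refine Submodule.add_mem _ (Submodule.smul_mem _ _ ?_) ?_
    · exact (mem_restrictTotalDegree _ _ _).2 hg
    · exact (mem_restrictTotalDegree _ _ _).2 hq
  have h1 := hL _ ((mem_restrictTotalDegree _ _ _).1 hmem)
  have h2 : (x • g + q) * (x • g + q) = (x * x) • (g * g) + (2 * x) • (g * q) + q * q := by
    simp only [smul_eq_C_mul, C_mul, map_ofNat]
    ring
  rw [h2, map_add, map_add, map_smul, map_smul, h0] at h1
  have h3 : 2 * x * L (g * q) = -(L (q * q) + 1) := by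
    rw [hx]; field_simp
  simp only [smul_eq_mul] at h1
  rw [h3] at h1
  linarith

theorem aux_bil {n : ℕ} (L : Module.Dual ℝ (MP n)) (s : ℕ) (p q : RxT n s) :
    momBil L s p q = L ((p : MP n) * (q : MP n)) := rfl

theorem aux_ker {n : ℕ} (L : Module.Dual ℝ (MP n)) (s : ℕ) (p : RxT n s) :
    p ∈ LinearMap.ker (momBil L s) ↔ ∀ q : MP n, q.totalDegree ≤ s → L ((p : MP n) * q) = 0 := by
  rw [LinearMap.mem_ker]
  constructor
  · intro h q hq
    have := LinearMap.congr_fun h ⟨q, (mem_restrictTotalDegree _ _ _).2 hq⟩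
    exact this
  · intro h
    ext q
    exact h q ((mem_restrictTotalDegree _ _ _).1 q.2)

theorem aux_generic {n m t : ℕ} (h : Fin m → MP n)
    (Lstar : Module.Dual ℝ (MP n)) (hgen : Generic h t Lstar)
    (L : Module.Dual ℝ (MP n)) (hL : L ∈ Kpos h t) (g : MP n) (hg : g ∈ momKer Lstar (t / 2)) :
    L (g * g) = 0 := by
  obtain ⟨hK, hmax⟩ := hgen
  set d := t / 2 with hd
  have hsum : L + Lstar ∈ Kpos h t := by
    refine ⟨fun x hx => ?_, fun p hp => ?_⟩
    · rw [LinearMap.add_apply, hL.1 x hx, hK.1 x hx, add_zero]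
    · rw [LinearMap.add_apply]
      exact add_nonneg (hL.2 p hp) (hK.2 p hp)
  have hle : LinearMap.ker (momBil (L + Lstar) d) ≤ LinearMap.ker (momBil Lstar d) := by
    intro p hp
    rw [aux_ker] at hp ⊢
    have hpd := (mem_restrictTotalDegree _ _ _).1 p.2
    have h1 := hp p hpd
    rw [LinearMap.add_apply] at h1
    have h2 := hL.2 p hpd
    have h3 := hK.2 p hpd
    intro q hq
    exact aux_psd Lstar d hK.2 p q hpd hq (by linarith)
  have hr := hmax _ hsum
  have r1 := LinearMap.finrank_range_add_finrank_ker (momBil (L + Lstar) d)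
  have r2 := LinearMap.finrank_range_add_finrank_ker (momBil Lstar d)
  unfold momRank at hr
  have heq := Submodule.eq_of_le_of_finrank_le hle (by omega)
  have hgm : (⟨g, (mem_restrictTotalDegree _ _ _).2 hg.1⟩ : RxT n d) ∈
      LinearMap.ker (momBil Lstar d) := by
    rw [aux_ker]
    exact fun q hq => aux_ext Lstar d g hg.2 q hq
  have hgs := hgm
  rw [← heq] at hgm
  rw [aux_ker] at hgm hgs
  have h1 := hgm g hg.1
  have h2 := hgs g hg.1
  rw [LinearMap.add_apply] at h1
  simp only at h1 h2
  linarith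

theorem aux_le (n k : ℕ) : RxT n k ≤ RxT n (k + 1) := by
  intro p hp
  rw [mem_restrictTotalDegree] at hp ⊢
  omega

theorem aux_split {n k : ℕ} (G : Set (MP n)) (hdim : dimProj (k + 1) G = dimProj k G) :
    RxT n (k + 1) ≤ RxT n k ⊔ Submodule.span ℝ G := by
  intro p hp
  by_contra hnot
  obtain ⟨f, hf, hf0⟩ := Submodule.exists_dual_map_eq_bot_of_notMem hnot inferInstance
  rw [← LinearMap.le_ker_iff_map] at hf0
  let ρ : Module.Dual ℝ (RxT n (k + 1)) →ₗ[ℝ] Module.Dual ℝ (RxT n k) :=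
    (Submodule.inclusion (aux_le n k)).dualMap
  have hρ : ρ ∘ₗ projDual n (k + 1) = projDual n k := rfl
  unfold dimProj at hdim
  rw [← hρ, Submodule.map_comp] at hdim
  set V := Submodule.map (projDual n (k + 1)) (annih G) with hV
  have hfa : f ∈ annih G := by
    unfold annih
    rw [Submodule.mem_dualAnnihilator]
    exact fun w hw => hf0 (Submodule.mem_sup_right hw)
  have hfV : projDual n (k + 1) f ∈ V := Submodule.mem_map_of_mem hfa
  have hz := aux_inj1 ρ V hdim _ hfV (by
    ext q
    exact hf0 (Submodule.mem_sup_left q.2))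
  exact hf (LinearMap.congr_fun hz ⟨p, hp⟩)

theorem aux_rank {n k : ℕ} (L : Module.Dual ℝ (MP n))
    (H : ∀ p : RxT n (k + 1), ∃ q : RxT n k, ∀ r : MP n, r.totalDegree ≤ k + 1 →
      L ((p : MP n) * r) = L ((q : MP n) * r)) :
    momRank L (k + 1) = momRank L k := by
  let ι := Submodule.inclusion (aux_le n k)
  let ρ : Module.Dual ℝ (RxT n (k + 1)) →ₗ[ℝ] Module.Dual ℝ (RxT n k) := ι.dualMap
  have hB : momBil L k = ρ ∘ₗ (momBil L (k + 1) ∘ₗ ι) := rfl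
  have hdeg : ∀ r : RxT n (k + 1), (r : MP n).totalDegree ≤ k + 1 := fun r =>
    (mem_restrictTotalDegree _ _ _).1 r.2
  have hR : LinearMap.range (momBil L (k + 1) ∘ₗ ι) = LinearMap.range (momBil L (k + 1)) := by
    apply le_antisymm
    · exact LinearMap.range_comp_le_range _ _
    · rintro _ ⟨p, rfl⟩
      obtain ⟨q, hq⟩ := H p
      refine ⟨q, ?_⟩
      ext r
      exact (hq r (hdeg r)).symm
  unfold momRank
  rw [hB, LinearMap.range_comp, hR]
  refine aux_inj2 ρ (LinearMap.range (momBil L (k + 1))) ?_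
  rintro _ ⟨p, rfl⟩ hx
  ext r
  obtain ⟨q, hq⟩ := H r
  have h1 : L ((p : MP n) * (q : MP n)) = 0 := LinearMap.congr_fun hx q
  change L ((p : MP n) * (r : MP n)) = 0
  rw [mul_comm, hq p (hdeg p), mul_comm, h1]

end Helpers

/-- Let `1 ≤ s ≤ t` and `G = H_t ∪ W_t`.  If
`dim π_s(G^⊥) = dim π_{s−1}(G^⊥)`, then `rank M_s(L) = rank M_{s−1}(L)` for every
`L ∈ K_{t+2s,⪰}`. -/
theorem momRank_eq_of_dimProj_eq {n m s t : ℕ} (h : Fin m → MP n)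
    (hs1 : 1 ≤ s) (hst : s ≤ t)
    (Lstar : Module.Dual ℝ (MP n)) (hgen : Generic h t Lstar)
    (hdim : dimProj s (Hset h t ∪ Wset h t Lstar) =
      dimProj (s - 1) (Hset h t ∪ Wset h t Lstar)) :
    ∀ L ∈ Kpos h (t + 2 * s), momRank L s = momRank L (s - 1) := by
  intro L hL
  obtain ⟨k, rfl⟩ : ∃ k, s = k + 1 := ⟨s - 1, by omega⟩
  simp only [Nat.add_sub_cancel] at hdim ⊢
  have hLt : L ∈ Kpos h t := by
    refine ⟨fun g hg => ?_, fun p hp => hL.2 p (by omega)⟩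
    obtain ⟨α, j, hα, rfl⟩ := hg
    exact hL.1 _ ⟨α, j, by omega, rfl⟩
  have key : ∀ g ∈ Submodule.span ℝ (Hset h t ∪ Wset h t Lstar), ∀ r : MP n,
      r.totalDegree ≤ k + 1 → L (g * r) = 0 := by
    intro g hg r hr
    refine aux_ext L (k + 1) g (fun β hβ => ?_) r hr
    induction hg using Submodule.span_induction with
    | zero => simp
    | add x y _ _ hx hy => rw [add_mul, map_add, hx, hy, add_zero]
    | smul a x _ hx => rw [smul_mul_assoc, map_smul, hx, smul_zero]
    | mem x hx =>
      rcases hx with ⟨α, j, hα, rfl⟩ | ⟨α, g, hα, hg, rfl⟩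
      · refine hL.1 _ ⟨α + β, j, ?_, ?_⟩
        · rw [aux_mdeg_add]; omega
        · rw [← one_mul (1 : ℝ), ← monomial_mul, one_mul]; ring
      · have h0 := aux_generic h Lstar hgen L hLt g hg
        have h1 := aux_psd L _ hL.2 g (monomial (α + β) 1) (hg.1.trans (by omega))
          (by rw [aux_monomial_deg, aux_mdeg_add]; omega) h0
        rw [← h1, ← one_mul (1 : ℝ), ← monomial_mul, one_mul]
        congr 1
        ring
  apply aux_rank
  intro p
  obtain ⟨q, hq, g, hg, hpq⟩ := Submodule.mem_sup.1 (aux_split _ hdim p.2)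
  refine ⟨⟨q, hq⟩, fun r hr => ?_⟩
  rw [← hpq, add_mul, map_add, key g hg r hr, add_zero]
end
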